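/- arXiv:1503.04135 — 8 statements merged into one kernel-verified Lean document; each statement's English description precedes it below -/
import Mathlib

section
/- Let μ be a probability measure on a measurable space Ω and let A, B, C be events with μ(A) > 0 and μ(B) > 0 (hence μ(A ∪ B) > 0). Set x = p(C|B), y = p(B|A), t = p(A|A ∪ B), and z = p(C|A). Then z ≥ x·y − (1 − t)(1 − x)/t; in particular z ≥ max{0, x·y − (1 − t)(1 − x)/t}. (Lower probability bound of the Weak Transitivity propagation rule, Theorem 3 of the paper, for the case t > 0.) -/
open MeasureTheory

/-- Conditional probability `p(E|H) = μ(E ∩ H) / μ(H)` as a real number. -/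
noncomputable def condProb {Ω : Type*} [MeasurableSpace Ω] (μ : Measure Ω) (E H : Set Ω) : ℝ :=
  (μ (E ∩ H)).toReal / (μ H).toReal

/-!
The odds `(1 - t) / t` equal `μ(B \ A) / μ(A)`, and `μ(B ∩ A) = μ(B) - μ(B \ A)`. Substituting both
makes the terms in `x * μ(B \ A)` cancel, so that the bound collapses to
`(μ(C ∩ B) - μ(B \ A)) / μ(A)`. This is at most `μ(C ∩ A) / μ(A)` because
`C ∩ B ⊆ (C ∩ A) ∪ (B \ A)`.
-/

section

open scoped ENNReal

variable {Ω : Type*} [MeasurableSpace Ω] {μ : Measure Ω} {A B : Set Ω}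

theorem condProb_eq_measureReal_div (μ : Measure Ω) (E H : Set Ω) :
    condProb μ E H = μ.real (E ∩ H) / μ.real H :=
  rfl

theorem condProb_nonneg (μ : Measure Ω) (E H : Set Ω) : 0 ≤ condProb μ E H :=
  div_nonneg measureReal_nonneg measureReal_nonneg

theorem measureReal_inter_le_inter_add_sdiff (C : Set Ω) (hCA : μ (C ∩ A) ≠ ∞)
    (hBA : μ (B \ A) ≠ ∞) :
    μ.real (C ∩ B) ≤ μ.real (C ∩ A) + μ.real (B \ A) := by
  have hsub : C ∩ B ⊆ C ∩ A ∪ B \ A := fun ω ⟨hωC, hωB⟩ ↦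
    (em (ω ∈ A)).imp (fun hωA ↦ ⟨hωC, hωA⟩) (fun hωA ↦ ⟨hωB, hωA⟩)
  exact (measureReal_mono hsub (by finiteness)).trans (measureReal_union_le _ _)

theorem one_sub_condProb_union_div_condProb_union (hA : MeasurableSet A) (hA_ne_zero : μ A ≠ 0)
    (hA_ne_top : μ A ≠ ∞) (hB_ne_top : μ B ≠ ∞) :
    (1 - condProb μ A (A ∪ B)) / condProb μ A (A ∪ B) = μ.real (B \ A) / μ.real A := by
  have hunion : μ.real (A ∪ B) = μ.real A + μ.real (B \ A) := (measureReal_add_sdiff hA).symm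
  have hunion_ne_zero : μ.real (A ∪ B) ≠ 0 :=
    (measureReal_ne_zero_iff (by finiteness)).2 fun h ↦
      hA_ne_zero (measure_mono_null Set.subset_union_left h)
  rw [condProb_eq_measureReal_div, Set.inter_eq_left.2 Set.subset_union_left,
    one_sub_div hunion_ne_zero, div_div_div_cancel_right₀ hunion_ne_zero, hunion,
    add_sub_cancel_left]

theorem condProb_mul_condProb_sub_eq (C : Set Ω) (hA : MeasurableSet A) (hA_ne_zero : μ A ≠ 0)
    (hA_ne_top : μ A ≠ ∞) (hB_ne_zero : μ B ≠ 0) (hB_ne_top : μ B ≠ ∞) :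
    condProb μ C B * condProb μ B A -
        (1 - condProb μ A (A ∪ B)) * (1 - condProb μ C B) / condProb μ A (A ∪ B) =
      (μ.real (C ∩ B) - μ.real (B \ A)) / μ.real A := by
  have hsplit : μ.real (B ∩ A) = μ.real B - μ.real (B \ A) :=
    eq_sub_of_add_eq (measureReal_inter_add_sdiff hA)
  have hCB : condProb μ C B * μ.real B = μ.real (C ∩ B) :=
    div_mul_cancel₀ _ ((measureReal_ne_zero_iff hB_ne_top).2 hB_ne_zero)
  rw [mul_div_right_comm,
    one_sub_condProb_union_div_condProb_union hA hA_ne_zero hA_ne_top hB_ne_top,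
    condProb_eq_measureReal_div μ B A, hsplit, ← hCB]
  ring

theorem weak_transitivity_lower_bound_general (C : Set Ω) (hA : MeasurableSet A)
    (hA_ne_zero : μ A ≠ 0) (hA_ne_top : μ A ≠ ∞) (hB_ne_zero : μ B ≠ 0) (hB_ne_top : μ B ≠ ∞) :
    max 0 (condProb μ C B * condProb μ B A -
        (1 - condProb μ A (A ∪ B)) * (1 - condProb μ C B) / condProb μ A (A ∪ B)) ≤
      condProb μ C A := by
  refine max_le (condProb_nonneg μ C A) ?_
  rw [condProb_mul_condProb_sub_eq C hA hA_ne_zero hA_ne_top hB_ne_zero hB_ne_top,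
    condProb_eq_measureReal_div μ C A]
  gcongr
  exact sub_le_iff_le_add.2 <| measureReal_inter_le_inter_add_sdiff C
    (measure_ne_top_of_subset Set.inter_subset_right hA_ne_top)
    (measure_ne_top_of_subset Set.sdiff_subset hB_ne_top)

end

theorem weak_transitivity_lower_bound {Ω : Type*} [MeasurableSpace Ω]
    (μ : Measure Ω) [IsProbabilityMeasure μ] (A B C : Set Ω)
    (hA : MeasurableSet A) (hB : MeasurableSet B) (hC : MeasurableSet C)
    (hApos : 0 < μ A) (hBpos : 0 < μ B)
    (x y t z : ℝ)
    (hx : x = condProb μ C B) (hy : y = condProb μ B A)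
    (ht : t = condProb μ A (A ∪ B)) (hz : z = condProb μ C A) :
    x * y - (1 - t) * (1 - x) / t ≤ z ∧
      max 0 (x * y - (1 - t) * (1 - x) / t) ≤ z := by
  subst hx hy ht hz
  have hmax := weak_transitivity_lower_bound_general C hA hApos.ne' (measure_ne_top μ A) hBpos.ne'
    (measure_ne_top μ B)
  exact ⟨(le_max_right _ _).trans hmax, hmax⟩
end

section
/- Let (x, y, t) ∈ [0,1]³ with t > 0 and y·t + 1 − t > 0, and let z be a real number with max{0, x·y − (1 − t)(1 − x)/t} ≤ z ≤ min{1, (1 − x)(1 − y) + x/t}. Then there exist a probability measure μ on a finite sample space and events A, B, C with μ(A) > 0 and μ(B) > 0 such that p(C|B) = x, p(B|A) = y, p(A|A ∪ B) = t, and p(C|A) = z. (Attainability direction of the Weak Transitivity propagation rule, Theorem 3 of the paper, for conditioning events of positive probability.) -/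
open MeasureTheory

/-!
Prescribing `p(C|B)`, `p(B|A)`, `p(A|A ∪ B)` and `p(C|A)` on a space equal to `A ∪ B` amounts to
prescribing the masses `p`, `q`, `r` of `A ∩ B`, `A \ B`, `B \ A` and the masses `u`, `v` of
`C ∩ A`, `C ∩ B`. The only remaining freedom is the mass `a` of `A ∩ B ∩ C`, which must lie in the
three intervals `[0, p]`, `[u - q, u]` and `[v - r, v]`. Intervals that meet pairwise have a common
point, and the conditions for `[u - q, u]` to meet `[v - r, v]` are exactly the two nontrivial
bounds on `z`.
-/

open Set

lemma condProb_eq_iff {Ω : Type*} [MeasurableSpace Ω] {μ : Measure Ω} {E H : Set Ω} {c : ℝ}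
    (hH : μ.real H ≠ 0) : condProb μ E H = c ↔ μ.real (E ∩ H) = c * μ.real H :=
  div_eq_iff hH

lemma exists_isProbabilityMeasure_real_eq_sum_indicator {ι : Type*} [Fintype ι]
    [MeasurableSpace ι] [MeasurableSingletonClass ι] {w : ι → ℝ} (hw : w ∈ stdSimplex ℝ ι) :
    ∃ μ : Measure ι, IsProbabilityMeasure μ ∧ ∀ s : Set ι, μ.real s = ∑ i, s.indicator w i := by
  have hsum : ∑ i, ENNReal.ofReal (w i) = 1 := by
    rw [← ENNReal.ofReal_sum_of_nonneg fun i _ ↦ hw.1 i, hw.2, ENNReal.ofReal_one]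
  refine ⟨(PMF.ofFintype _ hsum).toMeasure, inferInstance, fun s ↦ ?_⟩
  classical
  rw [measureReal_def, PMF.toMeasure_apply_fintype, ENNReal.toReal_sum fun i _ ↦ ?_]
  · simp [indicator_apply, apply_ite ENNReal.toReal, hw.1]
  · simp [indicator_apply, apply_ite (· = ⊤)]

lemma exists_mem_Icc_sub_mem_Icc_sub_mem_Icc {G : Type*} [AddCommGroup G] [LinearOrder G]
    [IsOrderedAddMonoid G] {p q r u v : G} (hp : 0 ≤ p) (hq : 0 ≤ q) (hr : 0 ≤ r)
    (hu : u ∈ Icc 0 (p + q)) (hv : v ∈ Icc 0 (p + r)) (huv : u ≤ v + q) (hvu : v ≤ u + r) :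
    ∃ a ∈ Icc 0 p, u - a ∈ Icc 0 q ∧ v - a ∈ Icc 0 r := by
  have hne : (Icc 0 p ∩ Icc (u - q) u ∩ Icc (v - r) v).Nonempty := by
    simp only [Icc_inter_Icc, nonempty_Icc, sup_le_iff, le_inf_iff, sub_le_iff_le_add]
    exact ⟨⟨⟨⟨hp, hu.2⟩, hv.2⟩, ⟨hu.1, le_add_of_nonneg_right hq⟩, hvu⟩,
      ⟨hv.1, huv⟩, le_add_of_nonneg_right hr⟩
  obtain ⟨a, ⟨ha, hua⟩, hva⟩ := hne
  exact ⟨a, ha, ⟨sub_nonneg.2 hua.2, sub_le_comm.1 hua.1⟩,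
    sub_nonneg.2 hva.2, sub_le_comm.1 hva.1⟩

lemma exists_isProbabilityMeasure_fin_six_of_masses {p q r u v : ℝ} (hp : 0 ≤ p) (hq : 0 ≤ q)
    (hr : 0 ≤ r) (hpqr : p + q + r = 1) (hu : u ∈ Icc 0 (p + q)) (hv : v ∈ Icc 0 (p + r))
    (huv : u ≤ v + q) (hvu : v ≤ u + r) :
    ∃ (μ : Measure (Fin 6)) (_ : IsProbabilityMeasure μ) (A B C : Set (Fin 6)),
      A ∪ B = univ ∧ μ.real A = p + q ∧ μ.real B = p + r ∧
      μ.real (B ∩ A) = p ∧ μ.real (C ∩ A) = u ∧ μ.real (C ∩ B) = v := by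
  obtain ⟨a, ha, hua, hva⟩ := exists_mem_Icc_sub_mem_Icc_sub_mem_Icc hp hq hr hu hv huv hvu
  -- The entries come in pairs (inside `C`, outside `C`), for `A ∩ B`, `A \ B` and `B \ A` in turn.
  have hw : ![a, p - a, u - a, q - (u - a), v - a, r - (v - a)] ∈ stdSimplex ℝ (Fin 6) := by
    constructor
    · simp [Fin.forall_fin_succ, ha.1, ha.2, hua.1, hua.2, hva.1, hva.2]
    · simp only [Fin.sum_univ_six, Matrix.cons_val]
      linarith
  obtain ⟨μ, hμ, hreal⟩ := exists_isProbabilityMeasure_real_eq_sum_indicator hw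
  refine ⟨μ, hμ, {0, 1, 2, 3}, {0, 1, 4, 5}, {0, 2, 4}, ?_, ?_, ?_, ?_, ?_, ?_⟩
  · ext i
    fin_cases i <;> simp
  all_goals simp [hreal, Fin.sum_univ_six, indicator_apply]

section Bounds

variable {K : Type*} [Field K] [LinearOrder K] [IsStrictOrderedRing K] {x y t z : K}

lemma weakTransitivity_lower_bound_iff (ht : 0 < t) :
    x * y - (1 - t) * (1 - x) / t ≤ z ↔ x * (y * t + 1 - t) ≤ z * t + (1 - t) := by
  rw [sub_le_iff_le_add, ← sub_le_iff_le_add', le_div_iff₀ ht]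
  constructor <;> intro h <;> linarith

lemma weakTransitivity_upper_bound_iff (ht : 0 < t) :
    z ≤ (1 - x) * (1 - y) + x / t ↔ z * t ≤ x * (y * t + 1 - t) + (1 - y) * t := by
  rw [← sub_le_iff_le_add', le_div_iff₀ ht]
  constructor <;> intro h <;> linarith

end Bounds

theorem weak_transitivity_attainability (x y t z : ℝ)
    (hx : x ∈ Set.Icc (0 : ℝ) 1) (hy : y ∈ Set.Icc (0 : ℝ) 1)
    (ht : t ∈ Set.Icc (0 : ℝ) 1) (htpos : 0 < t)
    (hyt : 0 < y * t + 1 - t)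
    (hzl : max 0 (x * y - (1 - t) * (1 - x) / t) ≤ z)
    (hzu : z ≤ min 1 ((1 - x) * (1 - y) + x / t)) :
    ∃ (μ : Measure (Fin 6)) (_ : IsProbabilityMeasure μ) (A B C : Set (Fin 6)),
      0 < μ A ∧ 0 < μ B ∧
      condProb μ C B = x ∧ condProb μ B A = y ∧
      condProb μ A (A ∪ B) = t ∧ condProb μ C A = z := by
  obtain ⟨hz0, hzl⟩ := max_le_iff.1 hzl
  obtain ⟨hz1, hzu⟩ := le_min_iff.1 hzu
  have hpq : y * t + (1 - y) * t = t := by ring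
  have hpr : y * t + (1 - t) = y * t + 1 - t := by ring
  have hu : z * t ∈ Icc 0 (y * t + (1 - y) * t) :=
    hpq.symm ▸ ⟨mul_nonneg hz0 ht.1, mul_le_of_le_one_left ht.1 hz1⟩
  have hv : x * (y * t + 1 - t) ∈ Icc 0 (y * t + (1 - t)) :=
    hpr.symm ▸ ⟨mul_nonneg hx.1 hyt.le, mul_le_of_le_one_left hyt.le hx.2⟩
  obtain ⟨μ, hμ, A, B, C, hAB, hA, hB, hBA, hCA, hCB⟩ :=
    exists_isProbabilityMeasure_fin_six_of_masses (mul_nonneg hy.1 ht.1)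
      (mul_nonneg (sub_nonneg.2 hy.2) ht.1) (sub_nonneg.2 ht.2) (by ring) hu hv
      ((weakTransitivity_upper_bound_iff htpos).1 hzu)
      ((weakTransitivity_lower_bound_iff htpos).1 hzl)
  rw [hpq] at hA
  rw [hpr] at hB
  have hA0 : 0 < μ.real A := hA ▸ htpos
  have hB0 : 0 < μ.real B := hB ▸ hyt
  have htAB : condProb μ A (A ∪ B) = t := by
    rw [condProb_eq_iff (by simp [hAB]), hAB, inter_univ, probReal_univ, hA, mul_one]
  exact ⟨μ, hμ, A, B, C, (ENNReal.toReal_pos_iff.1 hA0).1, (ENNReal.toReal_pos_iff.1 hB0).1,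
    (condProb_eq_iff hB0.ne').2 (hB ▸ hCB), (condProb_eq_iff hA0.ne').2 (hA ▸ hBA), htAB,
    (condProb_eq_iff hA0.ne').2 (hA ▸ hCA)⟩
end

section
/- Let (x, y, t) ∈ [0,1]³ with t > 0, y·t + 1 − t > 0, and t·(1 − x + x·y) ≤ 1 − x. Then there exist a probability measure μ on a finite sample space and events A, B, C with μ(A) > 0 and μ(B) > 0 such that p(C|B) = x, p(B|A) = y, p(A|A ∪ B) = t, and p(C|A) = 0. (Attainability of the lower bound z' = 0 in Theorem 3 of the paper, corresponding to the solvability of the linear system obtained by setting z = 0.) -/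
open MeasureTheory

section AtomicMeasure

variable {ι Ω : Type*} [Fintype ι] [MeasurableSpace Ω]

/-- The measure with an atom of mass `w i` at each point `e i`. Masses are real, so that weights
can be written with subtraction; negative ones are truncated to `0`. -/
noncomputable def atomicMeasure (e : ι → Ω) (w : ι → ℝ) : Measure Ω :=
  ∑ i, ENNReal.ofReal (w i) • Measure.dirac (e i)

lemma isProbabilityMeasure_atomicMeasure (e : ι → Ω) {w : ι → ℝ} (hw : ∀ i, 0 ≤ w i)
    (hsum : ∑ i, w i = 1) : IsProbabilityMeasure (atomicMeasure e w) where
  measure_univ := by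
    simp [atomicMeasure, ← ENNReal.ofReal_sum_of_nonneg fun i _ ↦ hw i, hsum]

variable [MeasurableSingletonClass Ω] (e : ι ↪ Ω) {w : ι → ℝ}

lemma atomicMeasure_image (hw : ∀ i, 0 ≤ w i) (s : Finset ι) :
    atomicMeasure e w (e '' s) = ENNReal.ofReal (∑ i ∈ s, w i) := by
  classical
  rw [ENNReal.ofReal_sum_of_nonneg fun i _ ↦ hw i]
  simp [atomicMeasure, Set.indicator_apply, Finset.sum_ite_mem]

lemma condProb_atomicMeasure_image [DecidableEq ι] (hw : ∀ i, 0 ≤ w i) (s u : Finset ι) :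
    condProb (atomicMeasure e w) (e '' s) (e '' u) = (∑ i ∈ s ∩ u, w i) / ∑ i ∈ u, w i := by
  have toReal_image (v : Finset ι) : (atomicMeasure e w (e '' v)).toReal = ∑ i ∈ v, w i := by
    rw [atomicMeasure_image e hw, ENNReal.toReal_ofReal (Finset.sum_nonneg fun i _ ↦ hw i)]
  rw [condProb, ← Set.image_inter e.injective, ← Finset.coe_inter, toReal_image, toReal_image]

end AtomicMeasure

/-- The masses of `A ∩ B`, `A \ B`, `B ∩ C` and `B \ (A ∪ C)`, in this order, that solve the linear
system `p(C|B) = x`, `p(B|A) = y`, `p(A|A ∪ B) = t`, `p(C|A) = 0` normalised by `μ(A ∪ B) = 1`: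
then `μ(A) = t` and `μ(B) = y * t + 1 - t`. -/
def cellMass (x y t : ℝ) : Fin 4 → ℝ :=
  ![y * t, (1 - y) * t, x * (y * t + 1 - t), 1 - t - x * (y * t + 1 - t)]

lemma cellMass_nonneg {x y t : ℝ} (hx : 0 ≤ x) (hy : y ∈ Set.Icc (0 : ℝ) 1)
    (ht : 0 ≤ t) (hyt : 0 ≤ y * t + 1 - t) (hsolv : t * (1 - x + x * y) ≤ 1 - x)
    (i : Fin 4) : 0 ≤ cellMass x y t i := by
  fin_cases i
  · exact mul_nonneg hy.1 ht
  · exact mul_nonneg (sub_nonneg.2 hy.2) ht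
  · exact mul_nonneg hx hyt
  · change 0 ≤ 1 - t - x * (y * t + 1 - t)
    linarith

lemma sum_cellMass (x y t : ℝ) : ∑ i, cellMass x y t i = 1 := by
  calc ∑ i, cellMass x y t i
      = y * t + (1 - y) * t + x * (y * t + 1 - t) + (1 - t - x * (y * t + 1 - t)) :=
        Fin.sum_univ_four _
    _ = 1 := by ring

lemma sum_cellMass_zero_one (x y t : ℝ) : ∑ i ∈ {0, 1}, cellMass x y t i = t := by
  calc ∑ i ∈ {0, 1}, cellMass x y t i
      = y * t + (1 - y) * t := Finset.sum_pair (by decide)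
    _ = t := by ring

lemma sum_cellMass_zero_two_three (x y t : ℝ) :
    ∑ i ∈ {0, 2, 3}, cellMass x y t i = y * t + 1 - t := by
  calc ∑ i ∈ {0, 2, 3}, cellMass x y t i
      = y * t + (x * (y * t + 1 - t) + (1 - t - x * (y * t + 1 - t))) := by simp [cellMass]
    _ = y * t + 1 - t := by ring

theorem weak_transitivity_lower_zero_attainable_general {Ω : Type*} [MeasurableSpace Ω]
    [MeasurableSingletonClass Ω] (e : Fin 4 ↪ Ω) {x y t : ℝ}
    (hx : 0 ≤ x) (hy : y ∈ Set.Icc (0 : ℝ) 1) (ht : 0 < t)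
    (hyt : 0 < y * t + 1 - t) (hsolv : t * (1 - x + x * y) ≤ 1 - x) :
    ∃ (μ : Measure Ω) (_ : IsProbabilityMeasure μ) (A B C : Set Ω),
      0 < μ A ∧ 0 < μ B ∧
      condProb μ C B = x ∧ condProb μ B A = y ∧
      condProb μ A (A ∪ B) = t ∧ condProb μ C A = 0 := by
  have hw := cellMass_nonneg hx hy ht.le hyt.le hsolv
  let A : Finset (Fin 4) := {0, 1}
  let B : Finset (Fin 4) := {0, 2, 3}
  let C : Finset (Fin 4) := {2}
  have hCB : C ∩ B = {2} := by decide
  have hBA : B ∩ A = {0} := by decide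
  have hAB : A ∪ B = Finset.univ := by decide
  have hCA : C ∩ A = ∅ := by decide
  refine ⟨atomicMeasure e (cellMass x y t),
    isProbabilityMeasure_atomicMeasure e hw (sum_cellMass x y t), e '' A, e '' B, e '' C,
    ?_, ?_, ?_, ?_, ?_, ?_⟩
  · rwa [atomicMeasure_image e hw, sum_cellMass_zero_one, ENNReal.ofReal_pos]
  · rwa [atomicMeasure_image e hw, sum_cellMass_zero_two_three, ENNReal.ofReal_pos]
  · rw [condProb_atomicMeasure_image e hw, hCB, sum_cellMass_zero_two_three,
      Finset.sum_singleton]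
    exact mul_div_cancel_right₀ x hyt.ne'
  · rw [condProb_atomicMeasure_image e hw, hBA, sum_cellMass_zero_one, Finset.sum_singleton]
    exact mul_div_cancel_right₀ y ht.ne'
  · rw [← Set.image_union, ← Finset.coe_union, condProb_atomicMeasure_image e hw, hAB,
      Finset.inter_univ, sum_cellMass_zero_one, sum_cellMass, div_one]
  · rw [condProb_atomicMeasure_image e hw, hCA, Finset.sum_empty, zero_div]

theorem weak_transitivity_lower_zero_attainable (x y t : ℝ)
    (hx : x ∈ Set.Icc (0 : ℝ) 1) (hy : y ∈ Set.Icc (0 : ℝ) 1)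
    (ht : t ∈ Set.Icc (0 : ℝ) 1) (htpos : 0 < t)
    (hyt : 0 < y * t + 1 - t)
    (hsolv : t * (1 - x + x * y) ≤ 1 - x) :
    ∃ (μ : Measure (Fin 6)) (_ : IsProbabilityMeasure μ) (A B C : Set (Fin 6)),
      0 < μ A ∧ 0 < μ B ∧
      condProb μ C B = x ∧ condProb μ B A = y ∧
      condProb μ A (A ∪ B) = t ∧ condProb μ C A = 0 :=
  weak_transitivity_lower_zero_attainable_general (Fin.castLEEmb (by decide)) hx.1 hy htpos hyt
    hsolv
end

section
/- Let (x, y, t) ∈ [0,1]³ with t > 0, y·t + 1 − t > 0, and t·(x + y − x·y) ≤ x. Then there exist a probability measure μ on a finite sample space and events A, B, C with μ(A) > 0 and μ(B) > 0 such that p(C|B) = x, p(B|A) = y, p(A|A ∪ B) = t, and p(C|A) = 1. (Attainability of the upper bound z'' = 1 in Theorem 3 of the paper, corresponding to the solvability of the linear system obtained by setting z = 1.) -/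
open MeasureTheory

/-!
Normalise `μ (A ∪ B) = 1`. The equations then prescribe `μ A = t`, `μ (A ∩ B) = y * t` and hence
`μ B = y * t + 1 - t`, and so `μ (B ∩ C) = x * (y * t + 1 - t)`. Asking for `A ⊆ C` leaves four
atoms, whose masses are determined; the only one that can be negative is
`μ ((B ∩ C) \ A) = x * (y * t + 1 - t) - y * t`, and its nonnegativity is
`t * (x + y - x * y) ≤ x`.
-/

section MapMeasure

variable {Ω Ω' : Type*} [MeasurableSpace Ω] [MeasurableSpace Ω'] {f : Ω → Ω'}

theorem map_apply_image (hf : MeasurableEmbedding f) (μ : Measure Ω) (s : Set Ω) :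
    μ.map f (f '' s) = μ s := by
  rw [hf.map_apply, hf.injective.preimage_image]

theorem condProb_map_image (hf : MeasurableEmbedding f) (μ : Measure Ω) (E H : Set Ω) :
    condProb (μ.map f) (f '' E) (f '' H) = condProb μ E H := by
  simp only [condProb, ← Set.image_inter hf.injective, map_apply_image hf]

end MapMeasure

section StdSimplex

variable {ι : Type*} [Fintype ι]

/-- The probability mass function on a finite type given by a point of the standard simplex; it
allows masses to be computed in `ℝ` instead of `ℝ≥0∞`. -/
noncomputable def stdSimplexPMF (w : stdSimplex ℝ ι) : PMF ι :=
  PMF.ofFintype (fun i => ENNReal.ofReal (w.1 i)) <| by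
    rw [← ENNReal.ofReal_sum_of_nonneg fun i _ => w.2.1 i, w.2.2, ENNReal.ofReal_one]

variable [MeasurableSpace ι] [MeasurableSingletonClass ι] (w : stdSimplex ℝ ι)

theorem stdSimplexPMF_toMeasure_finset (s : Finset ι) :
    (stdSimplexPMF w).toMeasure s = ENNReal.ofReal (∑ i ∈ s, w.1 i) := by
  rw [PMF.toMeasure_apply_finset, ENNReal.ofReal_sum_of_nonneg fun i _ => w.2.1 i]
  rfl

theorem condProb_stdSimplexPMF_toMeasure [DecidableEq ι] (E H : Finset ι) :
    condProb (stdSimplexPMF w).toMeasure E H = (∑ i ∈ E ∩ H, w.1 i) / ∑ i ∈ H, w.1 i := by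
  have toReal_mass (s : Finset ι) :
      ((stdSimplexPMF w).toMeasure s).toReal = ∑ i ∈ s, w.1 i := by
    rw [stdSimplexPMF_toMeasure_finset,
      ENNReal.toReal_ofReal (Finset.sum_nonneg fun i _ => w.2.1 i)]
  rw [condProb, ← Finset.coe_inter, toReal_mass, toReal_mass]

end StdSimplex

/-- The masses of the atoms `A ∩ B`, `A \ B`, `(B ∩ C) \ A` and `B \ (A ∪ C)`, in this order, of
the extremal distribution, which is carried by `A ∪ B` and has `A ⊆ C`. -/
def atomMass (x y t : ℝ) : Fin 4 → ℝ :=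
  ![y * t, t * (1 - y), x * (y * t + 1 - t) - y * t, (1 - x) * (y * t + 1 - t)]

theorem atomMass_mem_stdSimplex {x y t : ℝ} (hx : x ≤ 1) (hy : y ∈ Set.Icc (0 : ℝ) 1)
    (ht : 0 ≤ t) (hyt : 0 ≤ y * t + 1 - t) (hsolv : t * (x + y - x * y) ≤ x) :
    atomMass x y t ∈ stdSimplex ℝ (Fin 4) := by
  constructor
  · have mass_AB : 0 ≤ y * t := mul_nonneg hy.1 ht
    have mass_A_diff_B : 0 ≤ t * (1 - y) := mul_nonneg ht (sub_nonneg.2 hy.2)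
    have mass_BC_diff_A : 0 ≤ x * (y * t + 1 - t) - y * t := by linarith
    have mass_B_diff_AC : 0 ≤ (1 - x) * (y * t + 1 - t) := mul_nonneg (sub_nonneg.2 hx) hyt
    exact Fin.forall_fin_succ.2 ⟨mass_AB, Fin.forall_fin_succ.2 ⟨mass_A_diff_B,
      Fin.forall_fin_two.2 ⟨mass_BC_diff_A, mass_B_diff_AC⟩⟩⟩
  · simp only [Fin.sum_univ_four, atomMass, Matrix.cons_val]
    ring

theorem weak_transitivity_upper_one_attainable_general {Ω : Type*} [MeasurableSpace Ω]
    {f : Fin 4 → Ω} (hf : MeasurableEmbedding f) {x y t : ℝ} (hx : x ≤ 1)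
    (hy : y ∈ Set.Icc (0 : ℝ) 1) (htpos : 0 < t) (hyt : 0 < y * t + 1 - t)
    (hsolv : t * (x + y - x * y) ≤ x) :
    ∃ (μ : Measure Ω) (_ : IsProbabilityMeasure μ) (A B C : Set Ω),
      0 < μ A ∧ 0 < μ B ∧
      condProb μ C B = x ∧ condProb μ B A = y ∧
      condProb μ A (A ∪ B) = t ∧ condProb μ C A = 1 := by
  let w : stdSimplex ℝ (Fin 4) :=
    ⟨atomMass x y t, atomMass_mem_stdSimplex hx hy htpos.le hyt.le hsolv⟩
  let A : Finset (Fin 4) := {0, 1}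
  let B : Finset (Fin 4) := {0, 2, 3}
  let C : Finset (Fin 4) := {0, 1, 2}
  have mass_A : ∑ i ∈ A, w.1 i = t := by
    rw [Finset.sum_pair (by decide)]
    simp only [w, atomMass, Matrix.cons_val]
    ring
  have mass_B : ∑ i ∈ B, w.1 i = y * t + 1 - t := by
    rw [Finset.sum_insert (by decide), Finset.sum_pair (by decide)]
    simp only [w, atomMass, Matrix.cons_val]
    ring
  have mass_CB : ∑ i ∈ C ∩ B, w.1 i = x * (y * t + 1 - t) := by
    simp [show C ∩ B = {0, 2} by decide, w, atomMass]
  have mass_BA : ∑ i ∈ B ∩ A, w.1 i = y * t := by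
    simp [show B ∩ A = {0} by decide, w, atomMass]
  have mass_union : ∑ i ∈ A ∪ B, w.1 i = 1 := by
    rw [show A ∪ B = Finset.univ by decide, w.2.2]
  have A_inter_union : A ∩ (A ∪ B) = A := by decide
  have C_inter_A : C ∩ A = A := by decide
  refine ⟨(stdSimplexPMF w).toMeasure.map f, Measure.isProbabilityMeasure_map
    hf.measurable.aemeasurable, f '' A, f '' B, f '' C, ?_⟩
  simp only [← Set.image_union, ← Finset.coe_union, map_apply_image hf, condProb_map_image hf,
    stdSimplexPMF_toMeasure_finset, condProb_stdSimplexPMF_toMeasure, ENNReal.ofReal_pos,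
    A_inter_union, C_inter_A, mass_A, mass_B, mass_CB, mass_BA, mass_union]
  exact ⟨htpos, hyt, mul_div_cancel_right₀ x hyt.ne', mul_div_cancel_right₀ y htpos.ne',
    div_one t, div_self htpos.ne'⟩

theorem weak_transitivity_upper_one_attainable (x y t : ℝ)
    (hx : x ∈ Set.Icc (0 : ℝ) 1) (hy : y ∈ Set.Icc (0 : ℝ) 1)
    (ht : t ∈ Set.Icc (0 : ℝ) 1) (htpos : 0 < t)
    (hyt : 0 < y * t + 1 - t)
    (hsolv : t * (x + y - x * y) ≤ x) :
    ∃ (μ : Measure (Fin 6)) (_ : IsProbabilityMeasure μ) (A B C : Set (Fin 6)),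
      0 < μ A ∧ 0 < μ B ∧
      condProb μ C B = x ∧ condProb μ B A = y ∧
      condProb μ A (A ∪ B) = t ∧ condProb μ C A = 1 := by
  exact weak_transitivity_upper_one_attainable_general
    (f := Fin.castLE (by norm_num))
    ⟨Fin.castLE_injective _, .of_discrete, fun _ _ => .of_discrete⟩ hx.2 hy htpos hyt hsolv
end

section
/- Let μ be a probability measure on a measurable space Ω and let A, B, C be events with μ(A) > 0 and μ(B) > 0. If p(C|B) = 1 and p(B|A) > 0, then p(C|A) > 0, that is, p(Cᶜ|A) < 1. -/
open MeasureTheory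

/-!
`p(C|B) = 1` says that `B ⊆ C` up to a null set, and `p(·|A)` is monotone for inclusion up to
null sets, so `0 < p(B|A) ≤ p(C|A) = 1 - p(Cᶜ|A)`.
-/

section CondProb

variable {Ω : Type*} [MeasurableSpace Ω] {μ : Measure Ω} {E F H : Set Ω}

-- The disjunct `μ H = ⊤` is the junk value coming from `(⊤ : ENNReal).toReal = 0`.
theorem condProb_eq_zero_iff : condProb μ E H = 0 ↔ μ (E ∩ H) = 0 ∨ μ H = ⊤ := by
  have null_of_null : μ H = 0 → μ (E ∩ H) = 0 := measure_mono_null Set.inter_subset_right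
  have top_of_top : μ (E ∩ H) = ⊤ → μ H = ⊤ := measure_mono_top Set.inter_subset_right
  rw [condProb, div_eq_zero_iff, ENNReal.toReal_eq_zero_iff, ENNReal.toReal_eq_zero_iff]
  tauto

theorem measure_ne_zero_of_condProb_ne_zero (h : condProb μ E H ≠ 0) : μ H ≠ 0 :=
  fun hH ↦ h (condProb_eq_zero_iff.2 (.inl (measure_mono_null Set.inter_subset_right hH)))

theorem measure_ne_top_of_condProb_ne_zero (h : condProb μ E H ≠ 0) : μ H ≠ ⊤ :=
  fun hH ↦ h (condProb_eq_zero_iff.2 (.inr hH))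

theorem condProb_mono_ae (hEF : E ≤ᵐ[μ] F) : condProb μ E H ≤ condProb μ F H := by
  by_cases hH : μ H = ⊤
  · rw [condProb_eq_zero_iff.2 (.inr hH), condProb_eq_zero_iff.2 (.inr hH)]
  · have hle : μ (E ∩ H) ≤ μ (F ∩ H) := measure_mono_ae (hEF.inter .rfl)
    have hfin : μ (F ∩ H) ≠ ⊤ := measure_ne_top_of_subset Set.inter_subset_right hH
    exact div_le_div_of_nonneg_right (ENNReal.toReal_mono hfin hle) ENNReal.toReal_nonneg

theorem condProb_add_condProb_compl (hE : NullMeasurableSet E μ) (h₀ : μ H ≠ 0) (hH : μ H ≠ ⊤) :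
    condProb μ E H + condProb μ Eᶜ H = 1 := by
  have hsplit : μ.real (E ∩ H) + μ.real (Eᶜ ∩ H) = μ.real H := by
    rw [Set.inter_comm E, Set.inter_comm Eᶜ, ← Set.sdiff_eq]
    exact measureReal_inter_add_sdiff₀ hE hH
  calc condProb μ E H + condProb μ Eᶜ H
      = (μ.real (E ∩ H) + μ.real (Eᶜ ∩ H)) / μ.real H := (add_div _ _ _).symm
    _ = 1 := by rw [hsplit, div_self ((measureReal_ne_zero_iff hH).2 h₀)]

theorem ae_le_of_condProb_eq_one (hE : NullMeasurableSet E μ) (h : condProb μ E H = 1) :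
    H ≤ᵐ[μ] E := by
  have hne : condProb μ E H ≠ 0 := h ▸ one_ne_zero
  have hH : μ H ≠ ⊤ := measure_ne_top_of_condProb_ne_zero hne
  have hadd := condProb_add_condProb_compl hE (measure_ne_zero_of_condProb_ne_zero hne) hH
  have hcompl : condProb μ Eᶜ H = 0 := by linarith
  rw [ae_le_set, Set.sdiff_eq, Set.inter_comm]
  exact (condProb_eq_zero_iff.1 hcompl).resolve_right hH

theorem condProb_compl_lt_one (hE : NullMeasurableSet E μ) (h : 0 < condProb μ E H) :
    condProb μ Eᶜ H < 1 := by
  have hadd := condProb_add_condProb_compl hE (measure_ne_zero_of_condProb_ne_zero h.ne')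
    (measure_ne_top_of_condProb_ne_zero h.ne')
  linarith

end CondProb

theorem modus_darii_general {Ω : Type*} [MeasurableSpace Ω] {μ : Measure Ω} {A B C : Set Ω}
    (hC : NullMeasurableSet C μ) (hCB : condProb μ C B = 1) (hBA : 0 < condProb μ B A) :
    0 < condProb μ C A ∧ condProb μ Cᶜ A < 1 := by
  have hBC : B ≤ᵐ[μ] C := ae_le_of_condProb_eq_one hC hCB
  have hCA : 0 < condProb μ C A := hBA.trans_le (condProb_mono_ae hBC)
  exact ⟨hCA, condProb_compl_lt_one hC hCA⟩

theorem modus_darii {Ω : Type*} [MeasurableSpace Ω]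
    (μ : Measure Ω) [IsProbabilityMeasure μ] (A B C : Set Ω)
    (hA : MeasurableSet A) (hB : MeasurableSet B) (hC : MeasurableSet C)
    (hApos : 0 < μ A) (hBpos : 0 < μ B)
    (h1 : condProb μ C B = 1) (h2 : 0 < condProb μ B A) :
    0 < condProb μ C A ∧ condProb μ Cᶜ A < 1 :=
  modus_darii_general hC.nullMeasurableSet h1 h2
end

section
/- Let μ be a probability measure on a measurable space Ω and let A, B, C be events with μ(B) > 0 and p(A|B) > 0 (hence μ(A) > 0). If p(C|B) = 1 and p(B|A) = 1, then p(C|A) = 1. (Theorem 6 of the paper: the knowledge base (B ⇝ C, A ⇝ B, B ⇸ ¬A) p-entails A ⇝ C; the negated default B ⇸ ¬A is the stronger existential import assumption p(A|B) > 0.) -/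
open MeasureTheory

section

variable {Ω : Type*} [MeasurableSpace Ω] {μ : Measure Ω} {E H : Set Ω}

theorem ae_le_iff_measureReal_inter_eq (hE : NullMeasurableSet E μ) (hH : μ H ≠ ⊤) :
    H ≤ᵐ[μ] E ↔ μ.real (E ∩ H) = μ.real H := by
  have hsplit : μ.real (E ∩ H) + μ.real (H \ E) = μ.real H := by
    rw [Set.inter_comm, measureReal_inter_add_sdiff₀ hE hH]
  rw [ae_le_set, ← measureReal_eq_zero_iff (measure_ne_top_of_subset Set.sdiff_subset hH),
    ← hsplit, left_eq_add]

-- The quotient is `0` by convention when `μ H` is `0` or `∞`, so the value `1` excludes both.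
theorem condProb_eq_one_iff (hE : NullMeasurableSet E μ) :
    condProb μ E H = 1 ↔ μ.real H ≠ 0 ∧ H ≤ᵐ[μ] E := by
  change μ.real (E ∩ H) / μ.real H = 1 ↔ _
  rcases eq_or_ne (μ.real H) 0 with hH | hH
  · simp [hH]
  · have hH_top : μ H ≠ ⊤ := fun h ↦ hH (by simp [measureReal_def, h])
    rw [div_eq_one_iff_eq hH, ← ae_le_iff_measureReal_inter_eq hE hH_top, and_iff_right hH]

theorem modus_barbara_strong_import_general {A B C : Set Ω} (hB : NullMeasurableSet B μ)
    (hC : NullMeasurableSet C μ) (hCB : condProb μ C B = 1) (hBA : condProb μ B A = 1) :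
    condProb μ C A = 1 := by
  obtain ⟨-, hB_le_C⟩ := (condProb_eq_one_iff hC).1 hCB
  obtain ⟨hA_ne_zero, hA_le_B⟩ := (condProb_eq_one_iff hB).1 hBA
  exact (condProb_eq_one_iff hC).2 ⟨hA_ne_zero, hA_le_B.trans hB_le_C⟩

end

theorem modus_barbara_strong_import {Ω : Type*} [MeasurableSpace Ω]
    (μ : Measure Ω) [IsProbabilityMeasure μ] (A B C : Set Ω)
    (hA : MeasurableSet A) (hB : MeasurableSet B) (hC : MeasurableSet C)
    (hBpos : 0 < μ B) (hAB : 0 < condProb μ A B)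
    (h1 : condProb μ C B = 1) (h2 : condProb μ B A = 1) :
    condProb μ C A = 1 :=
  modus_barbara_strong_import_general hB.nullMeasurableSet hC.nullMeasurableSet h1 h2
end

section
/- Let x ∈ [0,1], y ∈ (0,1], and let z be a real number with max{0, (x + y − 1)/y} ≤ z ≤ min{1, x/y}. Then there exist a probability measure μ on a finite sample space and events A, B, C with μ(A) > 0 and μ(A ∩ B) > 0 such that p(C|A) = x, p(B|A) = y, and p(C|A ∩ B) = z. (Attainability direction of the propagation rule for the premise set (C|A, B|A) and conclusion C|AB, cited as Equation for [z', z''] in Example 1 of the paper.) -/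
/-!
Take `A` to be the whole space. Then `p(C|A) = x`, `p(B|A) = y` and `p(C|A ∩ B) = z` say exactly
that `B` and `C` have probabilities `y` and `x` and that `C ∩ B` has probability `z * y`. The
bounds on `z` are, after multiplication by `y`, the Fréchet bounds
`max 0 (y + x - 1) ≤ z * y ≤ min y x`, under which the four atoms of the algebra generated by `B`
and `C` can be given nonnegative weights.
-/

open MeasureTheory

theorem exists_isProbabilityMeasure_real_eq_sum {ι : Type*} [Fintype ι] [MeasurableSpace ι]
    [MeasurableSingletonClass ι] {w : ι → ℝ} (hw : w ∈ stdSimplex ℝ ι) :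
    ∃ μ : Measure ι, IsProbabilityMeasure μ ∧ ∀ s : Finset ι, μ.real s = ∑ i ∈ s, w i := by
  obtain ⟨hw_nonneg, hw_sum⟩ := hw
  have sum_ofReal (s : Finset ι) :
      ∑ i ∈ s, ENNReal.ofReal (w i) = ENNReal.ofReal (∑ i ∈ s, w i) :=
    (ENNReal.ofReal_sum_of_nonneg fun i _ ↦ hw_nonneg i).symm
  let P : PMF ι := PMF.ofFintype (fun i ↦ ENNReal.ofReal (w i)) (by
    rw [sum_ofReal, hw_sum, ENNReal.ofReal_one])
  refine ⟨P.toMeasure, inferInstance, fun s ↦ ?_⟩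
  rw [measureReal_def, P.toMeasure_apply_finset]
  simp only [P, PMF.ofFintype_apply]
  rw [sum_ofReal, ENNReal.toReal_ofReal (Finset.sum_nonneg fun i _ ↦ hw_nonneg i)]

theorem exists_isProbabilityMeasure_real_inter_eq {p q r : ℝ} (hr : 0 ≤ r) (hrp : r ≤ p)
    (hrq : r ≤ q) (hpq : p + q - 1 ≤ r) :
    ∃ μ : Measure (Fin 4), IsProbabilityMeasure μ ∧
      ∃ B C : Set (Fin 4), μ.real B = p ∧ μ.real C = q ∧ μ.real (C ∩ B) = r := by
  -- The weights of `B ∩ C`, `B \ C`, `C \ B` and `(B ∪ C)ᶜ`.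
  let w : Fin 4 → ℝ := ![r, p - r, q - r, 1 - p - q + r]
  have hw : w ∈ stdSimplex ℝ (Fin 4) := by
    refine ⟨?_, ?_⟩
    · intro i
      fin_cases i <;> simp only [w, Fin.reduceFinMk, Matrix.cons_val] <;> linarith
    · simp only [w, Fin.sum_univ_four, Matrix.cons_val]
      ring
  obtain ⟨μ, hμ, hμw⟩ := exists_isProbabilityMeasure_real_eq_sum hw
  let B : Finset (Fin 4) := {0, 1}
  let C : Finset (Fin 4) := {0, 2}
  refine ⟨μ, hμ, B, C, ?_, ?_, ?_⟩
  · rw [hμw, Finset.sum_pair (by decide)]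
    exact add_sub_cancel r p
  · rw [hμw, Finset.sum_pair (by decide)]
    exact add_sub_cancel r q
  · rw [← Finset.coe_inter, hμw, show C ∩ B = {0} by decide, Finset.sum_singleton]
    rfl

theorem condProb_univ_right {Ω : Type*} [MeasurableSpace Ω] (μ : Measure Ω)
    [IsProbabilityMeasure μ] (E : Set Ω) : condProb μ E Set.univ = μ.real E := by
  simp [condProb, measureReal_def]

theorem cautious_monotonicity_attainability (x y z : ℝ)
    (hx : x ∈ Set.Icc (0 : ℝ) 1) (hy : y ∈ Set.Ioc (0 : ℝ) 1)
    (hzl : max 0 ((x + y - 1) / y) ≤ z)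
    (hzu : z ≤ min 1 (x / y)) :
    ∃ (μ : Measure (Fin 4)) (_ : IsProbabilityMeasure μ) (A B C : Set (Fin 4)),
      0 < μ A ∧ 0 < μ (A ∩ B) ∧
      condProb μ C A = x ∧ condProb μ B A = y ∧
      condProb μ C (A ∩ B) = z := by
  obtain ⟨hz_nonneg, hz_lower⟩ := max_le_iff.mp hzl
  obtain ⟨hz_le_one, hz_upper⟩ := le_min_iff.mp hzu
  have hy_pos : 0 < y := hy.1
  rw [div_le_iff₀ hy_pos] at hz_lower
  rw [le_div_iff₀ hy_pos] at hz_upper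
  obtain ⟨μ, hμ, B, C, hB, hC, hCB⟩ :=
    exists_isProbabilityMeasure_real_inter_eq (mul_nonneg hz_nonneg hy_pos.le)
      (mul_le_of_le_one_left hy_pos.le hz_le_one) hz_upper (add_comm x y ▸ hz_lower)
  have hB_pos : 0 < μ B := (ENNReal.toReal_pos_iff.mp (hB.symm ▸ hy_pos : 0 < μ.real B)).1
  refine ⟨μ, hμ, Set.univ, B, C, ?_, ?_, ?_, ?_, ?_⟩
  · simp
  · rwa [Set.univ_inter]
  · rw [condProb_univ_right, hC]
  · rw [condProb_univ_right, hB]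
  · rw [Set.univ_inter, condProb, ← measureReal_def, ← measureReal_def, hCB, hB,
      mul_div_cancel_right₀ z hy_pos.ne']
end

section
/- Let (x, y, t) ∈ [0,1]³ with t > 0 and y·t + 1 − t > 0. Then there exist a probability measure μ on a finite sample space and events A, B, C with μ(A) > 0 and μ(B) > 0 such that p(C|B) = x, p(B|A) = y, and p(A|A ∪ B) = t. (Probability-measure version, for conditioning events of positive probability, of Remark 2 of the paper: the imprecise assessment [0,1]³ on (C|B, B|A, A|(A ∨ B)) is totally coherent.) -/
open MeasureTheory

/-!
Take independent events `U`, `V`, `C` of probabilities `t`, `y`, `x`, and put `A = U`,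
`B = Uᶜ ∪ V`. Then `A ∪ B` is the whole space, so `p(A|A ∪ B) = μ U = t`; inside `A` the events
`B` and `V` coincide, so `p(B|A) = μ V = y`; and `C` is independent of `B`, which has probability
`y * t + 1 - t`, so `p(C|B) = x`.

Three coin flips have eight outcomes. The value of `V` is irrelevant outside `U`, and forgetting
it there leaves six.
-/

open ProbabilityTheory unitInterval

section CondProb

variable {Ω Ω' : Type*} [MeasurableSpace Ω] [MeasurableSpace Ω'] {μ : Measure Ω}

theorem condProb_univ [IsProbabilityMeasure μ] (E : Set Ω) :
    condProb μ E Set.univ = μ.real E := by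
  simp [condProb, measureReal_def]

theorem condProb_compl_union_self (μ : Measure Ω) (E H : Set Ω) :
    condProb μ (Hᶜ ∪ E) H = condProb μ E H := by
  simp [condProb, Set.union_inter_distrib_right]

theorem condProb_eq_measureReal_of_indepSet {E H : Set Ω} (hEH : IndepSet E H μ)
    (hH : μ.real H ≠ 0) : condProb μ E H = μ.real E := by
  rw [condProb, hEH.measure_inter_eq_mul, ENNReal.toReal_mul]
  exact mul_div_cancel_right₀ _ hH

theorem condProb_map {f : Ω → Ω'} (hf : Measurable f) {E H : Set Ω'} (hE : MeasurableSet E)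
    (hH : MeasurableSet H) : condProb (μ.map f) E H = condProb μ (f ⁻¹' E) (f ⁻¹' H) := by
  simp only [condProb, Measure.map_apply hf hH, Measure.map_apply hf (hE.inter hH),
    Set.preimage_inter]

theorem measureReal_compl_union_of_indepSet [IsProbabilityMeasure μ] {U V : Set Ω}
    (hU : MeasurableSet U) (hVU : IndepSet V U μ) :
    μ.real (Uᶜ ∪ V) = μ.real V * μ.real U + 1 - μ.real U := by
  have inter_eq_mul : μ.real (V ∩ U) = μ.real V * μ.real U := by
    simp only [measureReal_def, hVU.measure_inter_eq_mul, ENNReal.toReal_mul]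
  calc μ.real (Uᶜ ∪ V)
      = μ.real (Uᶜ ∪ V ∩ U) := by
        rw [Set.union_inter_distrib_left, Set.compl_union_self, Set.inter_univ]
    _ = μ.real Uᶜ + μ.real (V ∩ U) :=
        measureReal_union' (disjoint_compl_left.mono_right Set.inter_subset_right) hU.compl
    _ = μ.real V * μ.real U + 1 - μ.real U := by
        rw [probReal_compl_eq_one_sub hU, inter_eq_mul]
        ring

end CondProb

section Assessment

variable {Ω Ω' : Type*} [MeasurableSpace Ω] [MeasurableSpace Ω'] {μ : Measure Ω}

/-- The events `A`, `B`, `C` realize the assessment `(x, y, t)` on the conditional events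
`(C|B, B|A, A|A ∪ B)`, with `A` and `B` of positive probability. -/
def RealizesAssessment (μ : Measure Ω) (A B C : Set Ω) (x y t : ℝ) : Prop :=
  0 < μ A ∧ 0 < μ B ∧ condProb μ C B = x ∧ condProb μ B A = y ∧ condProb μ A (A ∪ B) = t

theorem realizesAssessment_map_iff {f : Ω → Ω'} (hf : Measurable f) {A B C : Set Ω'}
    (hA : MeasurableSet A) (hB : MeasurableSet B) (hC : MeasurableSet C) {x y t : ℝ} :
    RealizesAssessment (μ.map f) A B C x y t ↔
      RealizesAssessment μ (f ⁻¹' A) (f ⁻¹' B) (f ⁻¹' C) x y t := by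
  simp only [RealizesAssessment, Measure.map_apply hf hA, Measure.map_apply hf hB,
    condProb_map hf hC hB, condProb_map hf hB hA, condProb_map hf hA (hA.union hB),
    Set.preimage_union]

theorem realizesAssessment_of_indepSet [IsProbabilityMeasure μ] {U V C : Set Ω}
    (hU : MeasurableSet U) (hVU : IndepSet V U μ) (hC : IndepSet C (Uᶜ ∪ V) μ)
    (hU_pos : 0 < μ.real U) (hB_pos : 0 < μ.real V * μ.real U + 1 - μ.real U) :
    RealizesAssessment μ U (Uᶜ ∪ V) C (μ.real C) (μ.real V) (μ.real U) := by
  rw [← measureReal_compl_union_of_indepSet hU hVU] at hB_pos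
  refine ⟨(ENNReal.toReal_pos_iff.1 hU_pos).1, (ENNReal.toReal_pos_iff.1 hB_pos).1,
    condProb_eq_measureReal_of_indepSet hC hB_pos.ne', ?_, ?_⟩
  · rw [condProb_compl_union_self, condProb_eq_measureReal_of_indepSet hVU hU_pos.ne']
  · rw [← Set.union_assoc, Set.union_compl_self, Set.univ_union, condProb_univ]

end Assessment

section Coins

variable {ι : Type*}

/-- The event that the `i`-th coin shows `true`. -/
def heads (i : ι) : Set (ι → Bool) :=
  {ω | ω i = true}

theorem measurableSet_heads (i : ι) : MeasurableSet (heads i) :=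
  measurableSet_eq_fun (measurable_pi_apply i) measurable_const

variable [Fintype ι]

/-- The joint law of independent coins, the `i`-th of which shows `true` with probability `p i`. -/
noncomputable def coinMeasure (p : ι → I) : Measure (ι → Bool) :=
  Measure.pi fun i ↦ Ber(true, false, p i)

instance (p : ι → I) : IsProbabilityMeasure (coinMeasure p) := by
  unfold coinMeasure
  infer_instance

theorem coinMeasure_real_heads (p : ι → I) (i : ι) : (coinMeasure p).real (heads i) = p i :=
  calc (coinMeasure p).real (heads i)
      = Ber(true, false, p i).real {true} :=
        (measurePreserving_eval (fun i ↦ Ber(true, false, p i)) i).measureReal_preimage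
          (MeasurableSet.singleton true).nullMeasurableSet
    _ = p i := by simp

theorem iIndepFun_eval_coinMeasure (p : ι → I) :
    iIndepFun (fun i (ω : ι → Bool) ↦ ω i) (coinMeasure p) :=
  iIndepFun_pi (X := fun _ ↦ id) fun _ ↦ aemeasurable_id

variable {i j k : ι}

theorem indepSet_heads (p : ι → I) (hij : i ≠ j) :
    IndepSet (heads i) (heads j) (coinMeasure p) :=
  (indepFun_iff_indepSet_preimage (measurable_pi_apply i) (measurable_pi_apply j)).1
    ((iIndepFun_eval_coinMeasure p).indepFun hij) {true} {true} .of_discrete .of_discrete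

theorem indepSet_heads_compl_union (p : ι → I) (hki : k ≠ i) (hkj : k ≠ j) :
    IndepSet (heads k) ((heads i)ᶜ ∪ heads j) (coinMeasure p) :=
  (indepFun_iff_indepSet_preimage (measurable_pi_apply k) (by fun_prop)).1
    ((iIndepFun_eval_coinMeasure p).indepFun_prodMk measurable_pi_apply i j k
      hki.symm hkj.symm).symm
    {true} {b | b.1 ≠ true ∨ b.2 = true} .of_discrete .of_discrete

theorem realizesAssessment_coinMeasure (p : ι → I) (hij : i ≠ j) (hki : k ≠ i) (hkj : k ≠ j)
    (hi_pos : 0 < (p i : ℝ)) (h_pos : 0 < (p j : ℝ) * p i + 1 - p i) :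
    RealizesAssessment (coinMeasure p) (heads i) ((heads i)ᶜ ∪ heads j) (heads k)
      (p k) (p j) (p i) := by
  simp only [← coinMeasure_real_heads p] at hi_pos h_pos ⊢
  exact realizesAssessment_of_indepSet (measurableSet_heads i) (indepSet_heads p hij.symm)
    (indepSet_heads_compl_union p hki hkj) hi_pos h_pos

end Coins

section MergeCoins

/-- The encoding of three coin flips by six outcomes that forgets the second flip when the first
one shows `false`. -/
def mergeCoins (ω : Fin 3 → Bool) : Fin 6 :=
  match ω 0, ω 1, ω 2 with
  | true, true, true => 0
  | true, true, false => 1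
  | true, false, true => 2
  | true, false, false => 3
  | false, _, true => 4
  | false, _, false => 5

theorem mergeCoins_preimage_eq_heads_zero : mergeCoins ⁻¹' {0, 1, 2, 3} = heads 0 := by
  ext ω
  change mergeCoins ω ∈ ({0, 1, 2, 3} : Set (Fin 6)) ↔ ω 0 = true
  revert ω
  decide

theorem mergeCoins_preimage_eq_compl_union :
    mergeCoins ⁻¹' {0, 1, 4, 5} = (heads 0)ᶜ ∪ heads 1 := by
  ext ω
  change mergeCoins ω ∈ ({0, 1, 4, 5} : Set (Fin 6)) ↔ ¬ ω 0 = true ∨ ω 1 = true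
  revert ω
  decide

theorem mergeCoins_preimage_eq_heads_two : mergeCoins ⁻¹' {0, 2, 4} = heads 2 := by
  ext ω
  change mergeCoins ω ∈ ({0, 2, 4} : Set (Fin 6)) ↔ ω 2 = true
  revert ω
  decide

end MergeCoins

theorem weak_transitivity_total_coherence (x y t : ℝ)
    (hx : x ∈ Set.Icc (0 : ℝ) 1) (hy : y ∈ Set.Icc (0 : ℝ) 1)
    (ht : t ∈ Set.Icc (0 : ℝ) 1) (htpos : 0 < t)
    (hyt : 0 < y * t + 1 - t) :
    ∃ (μ : Measure (Fin 6)) (_ : IsProbabilityMeasure μ) (A B C : Set (Fin 6)),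
      0 < μ A ∧ 0 < μ B ∧
      condProb μ C B = x ∧ condProb μ B A = y ∧
      condProb μ A (A ∪ B) = t := by
  let p : Fin 3 → I := ![⟨t, ht⟩, ⟨y, hy⟩, ⟨x, hx⟩]
  have measurable_mergeCoins : Measurable mergeCoins := .of_discrete
  refine ⟨(coinMeasure p).map mergeCoins,
    Measure.isProbabilityMeasure_map measurable_mergeCoins.aemeasurable,
    {0, 1, 2, 3}, {0, 1, 4, 5}, {0, 2, 4}, ?_⟩
  refine (realizesAssessment_map_iff measurable_mergeCoins .of_discrete .of_discrete
    .of_discrete).2 ?_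
  rw [mergeCoins_preimage_eq_heads_zero, mergeCoins_preimage_eq_compl_union,
    mergeCoins_preimage_eq_heads_two]
  exact realizesAssessment_coinMeasure p (by decide) (by decide) (by decide) htpos hyt
end
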